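/- arXiv:1907.05210 — 4 statements merged into one kernel-verified Lean document; each statement's English description precedes it below -/
import Mathlib

section
/- (Property 1) Let T, W, V, γ, b be positive real constants and define f_N(x) = √(T W x / V)·(ln(1+γ) − (b ln 2)/(T W x)) for x > 0. Let D ⊆ (0, ∞) be a convex set on which f_N(x) ≥ 0 for all x ∈ D. Then the composition x ↦ f_Q(f_N(x)) is convex on D, where f_Q is the Gaussian Q-function. -/
open MeasureTheory

/-- The Gaussian Q-function `f_Q(x) = (1/√(2π)) ∫_x^∞ e^{−t²/2} dt`. -/
noncomputable def gaussianQ (x : ℝ) : ℝ :=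
  (Real.sqrt (2 * Real.pi))⁻¹ * ∫ t in Set.Ioi x, Real.exp (-t ^ 2 / 2)

lemma gq_int : Integrable (fun t : ℝ => Real.exp (-t ^ 2 / 2)) := by
  have := integrable_exp_neg_mul_sq (b := 1 / 2) (by norm_num)
  refine this.congr (Filter.Eventually.of_forall fun t => ?_)
  show Real.exp _ = Real.exp _
  congr 1; ring

lemma gq_eq (x : ℝ) : gaussianQ x = (Real.sqrt (2 * Real.pi))⁻¹ *
    ((∫ t in Set.Ioi (0:ℝ), Real.exp (-t ^ 2 / 2)) - ∫ t in (0:ℝ)..x, Real.exp (-t ^ 2 / 2)) := by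
  unfold gaussianQ
  rw [← intervalIntegral.integral_Ioi_sub_Ioi' gq_int.integrableOn gq_int.integrableOn]
  ring

lemma gq_deriv (x : ℝ) : HasDerivAt gaussianQ
    (-((Real.sqrt (2 * Real.pi))⁻¹ * Real.exp (-x ^ 2 / 2))) x := by
  have hc : Continuous (fun t : ℝ => Real.exp (-t ^ 2 / 2)) := by fun_prop
  have h := intervalIntegral.integral_hasDerivAt_right (hc.intervalIntegrable 0 x)
    hc.stronglyMeasurable.stronglyMeasurableAtFilter hc.continuousAt
  rw [funext gq_eq]
  exact ((h.const_sub (∫ t in Set.Ioi (0:ℝ), Real.exp (-t ^ 2 / 2))).const_mul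
    (Real.sqrt (2 * Real.pi))⁻¹).congr_deriv (mul_neg _ _)

lemma gq_anti : Antitone gaussianQ := by
  apply antitone_of_deriv_nonpos (fun x => (gq_deriv x).differentiableAt)
  intro x
  rw [(gq_deriv x).deriv]
  have : 0 ≤ (Real.sqrt (2 * Real.pi))⁻¹ * Real.exp (-x ^ 2 / 2) := by positivity
  linarith

lemma gq_convex : ConvexOn ℝ (Set.Ici 0) gaussianQ := by
  apply MonotoneOn.convexOn_of_deriv (convex_Ici 0)
  · exact fun x _ => (gq_deriv x).continuousAt.continuousWithinAt
  · exact fun x _ => (gq_deriv x).differentiableAt.differentiableWithinAt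
  · intro x hx y hy hxy
    rw [interior_Ici] at hx hy
    rw [(gq_deriv x).deriv, (gq_deriv y).deriv]
    have hx : 0 < x := hx
    have : y ^ 2 ≥ x ^ 2 := by gcongr
    have : Real.exp (-y ^ 2 / 2) ≤ Real.exp (-x ^ 2 / 2) := Real.exp_le_exp.2 (by linarith)
    gcongr

theorem stmt2 (T W V γ b : ℝ) (hT : 0 < T) (hW : 0 < W) (hV : 0 < V)
    (hγ : 0 < γ) (hb : 0 < b) (D : Set ℝ) (hD : D ⊆ Set.Ioi (0 : ℝ))
    (hDconv : Convex ℝ D)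
    (hnonneg : ∀ x ∈ D,
      0 ≤ Real.sqrt (T * W * x / V) *
            (Real.log (1 + γ) - b * Real.log 2 / (T * W * x))) :
    ConvexOn ℝ D (fun x : ℝ =>
      gaussianQ (Real.sqrt (T * W * x / V) *
        (Real.log (1 + γ) - b * Real.log 2 / (T * W * x)))) := by
  have hL : 0 < Real.log (1 + γ) := Real.log_pos (by linarith)
  have hl2 : 0 < Real.log 2 := Real.log_pos (by norm_num)
  have key : ∀ x, 0 < x → Real.sqrt (T * W * x / V) *
        (Real.log (1 + γ) - b * Real.log 2 / (T * W * x)) =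
      Real.log (1 + γ) * Real.sqrt (T * W * x / V) -
        b * Real.log 2 / V * (Real.sqrt (T * W * x / V))⁻¹ := by
    intro x hx
    have hp : 0 < T * W * x / V := by positivity
    have hs : 0 < Real.sqrt (T * W * x / V) := Real.sqrt_pos.2 hp
    have h2 : T * W * x = V * Real.sqrt (T * W * x / V) ^ 2 := by
      rw [Real.sq_sqrt hp.le]; field_simp
    generalize Real.sqrt (T * W * x / V) = s at *
    rw [h2]
    field_simp
  refine ⟨hDconv, ?_⟩
  intro x hx y hy p q hp hq hpq
  have hz := hDconv hx hy hp hq hpq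
  have fx := hnonneg x hx
  have fy := hnonneg y hy
  have hx0 : 0 < x := hD hx
  have hy0 : 0 < y := hD hy
  have hz0 : 0 < p • x + q • y := hD hz
  refine le_trans (gq_anti ?_) (gq_convex.2 fx fy hp hq hpq)
  rw [key x hx0, key y hy0, key _ hz0]
  have hpx : 0 < T * W * x / V := by positivity
  have hpy : 0 < T * W * y / V := by positivity
  have hsx := Real.sqrt_pos.2 hpx
  have hsy := Real.sqrt_pos.2 hpy
  have h1 := Real.strictConcaveOn_sqrt.concaveOn.2 (Set.mem_Ici.2 hpx.le)
    (Set.mem_Ici.2 hpy.le) hp hq hpq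
  have e : p • (T * W * x / V) + q • (T * W * y / V) = T * W * (p • x + q • y) / V := by
    simp only [smul_eq_mul]; ring
  rw [e] at h1
  have hc : ConvexOn ℝ (Set.Ioi 0) (fun s : ℝ => s ^ (-1 : ℤ)) := convexOn_zpow (-1)
  have h2 := hc.2 (Set.mem_Ioi.2 hsx) (Set.mem_Ioi.2 hsy) hp hq hpq
  have hpos : 0 < p • Real.sqrt (T * W * x / V) + q • Real.sqrt (T * W * y / V) :=
    (convex_Ioi (0:ℝ)) hsx hsy hp hq hpq
  have h3 := inv_anti₀ hpos h1
  simp only [zpow_neg_one] at h2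
  have h4 := h3.trans h2
  have hC : 0 ≤ b * Real.log 2 / V := by positivity
  have h5 := mul_le_mul_of_nonneg_left h4 hC
  have h6 := mul_le_mul_of_nonneg_left h1 hL.le
  simp only [smul_eq_mul] at *
  linarith
end

section
/- For every real constant R ≥ 0, the function g(s) = (ln(1+s) − R) / √(1 − (1+s)^{−2}) is strictly increasing on (0, ∞). -/
/-- For every real constant `R ≥ 0`, the function
`g(s) = (ln(1+s) − R) / √(1 − (1+s)^{−2})` is strictly increasing on `(0, ∞)`. -/
theorem stmt8 (R : ℝ) (hR : 0 ≤ R) :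
    StrictMonoOn
      (fun s : ℝ => (Real.log (1 + s) - R) / Real.sqrt (1 - ((1 + s) ^ 2)⁻¹))
      (Set.Ioi (0 : ℝ)) := by
  have hV : ∀ x : ℝ, 0 < x → 0 < 1 - ((1 + x) ^ 2)⁻¹ := by
    intro x hx
    have : ((1 + x) ^ 2)⁻¹ < 1 := inv_lt_one_of_one_lt₀ (by nlinarith)
    linarith
  have hd : ∀ x : ℝ, 0 < x → HasDerivAt
      (fun s : ℝ => (Real.log (1 + s) - R) / Real.sqrt (1 - ((1 + s) ^ 2)⁻¹))
      (((1 / (1 + x)) * Real.sqrt (1 - ((1 + x) ^ 2)⁻¹) - (Real.log (1 + x) - R) *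
        ((2 * (1 + x) / ((1 + x) ^ 2) ^ 2) / (2 * Real.sqrt (1 - ((1 + x) ^ 2)⁻¹)))) /
        (Real.sqrt (1 - ((1 + x) ^ 2)⁻¹)) ^ 2) x := by
    intro x hx
    have h1 : HasDerivAt (fun s : ℝ => 1 + s) 1 x := (hasDerivAt_id x).const_add 1
    have h2 : HasDerivAt (fun s : ℝ => Real.log (1 + s) - R) (1 / (1 + x)) x :=
      (h1.log (by positivity)).sub_const R
    have h3 : HasDerivAt (fun s : ℝ => 1 - ((1 + s) ^ 2)⁻¹)
        (2 * (1 + x) / ((1 + x) ^ 2) ^ 2) x := by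
      have h0 : (1 + x) ^ 2 ≠ 0 := by positivity
      have h := ((h1.fun_pow 2).fun_inv h0).const_sub 1
      refine h.congr_deriv ?_
      simp [neg_div]
    exact h2.fun_div (h3.sqrt (hV x hx).ne') (Real.sqrt_pos.2 (hV x hx)).ne'
  apply strictMonoOn_of_deriv_pos (convex_Ioi 0)
  · intro x hx
    exact (hd x hx).continuousAt.continuousWithinAt
  · intro x hx
    rw [interior_Ioi] at hx
    have hx : 0 < x := hx
    rw [(hd x hx).deriv]
    have hq := Real.sqrt_pos.2 (hV x hx)
    have hs := Real.sq_sqrt (hV x hx).le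
    set q := Real.sqrt (1 - ((1 + x) ^ 2)⁻¹)
    apply div_pos _ (by positivity)
    have hl := Real.log_le_sub_one_of_pos (show 0 < 1 + x by linarith)
    have e : (1 / (1 + x)) * q - (Real.log (1 + x) - R) *
        ((2 * (1 + x) / ((1 + x) ^ 2) ^ 2) / (2 * q)) =
        ((1 + x) ^ 2 * q ^ 2 - (Real.log (1 + x) - R)) / ((1 + x) ^ 3 * q) := by
      field_simp
    have e2 : (1 + x) ^ 2 * q ^ 2 = (1 + x) ^ 2 - 1 := by
      rw [hs]; field_simp
    rw [e, e2]
    apply div_pos _ (by positivity)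
    nlinarith
end

section
/- (Proposition 2, pointwise form) Fix real constants n > 0, R ≥ 0, and γ₀ > 0, and define for α > 0 the decoding error probability e(α) = f_Q( √n · (ln(1 + α·γ₀) − R) / √(1 − (1 + α·γ₀)^{−2}) ), where f_Q is the Gaussian Q-function. Then e is non-increasing in α: if 0 < α' ≤ α*, then e(α*) ≤ e(α'). -/
open MeasureTheory

lemma gaussianQ_anti {x y : ℝ} (h : x ≤ y) : gaussianQ y ≤ gaussianQ x := by
  unfold gaussianQ
  apply mul_le_mul_of_nonneg_left _ (by positivity)
  have hi : Integrable (fun t : ℝ => Real.exp (-t ^ 2 / 2)) := by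
    have := integrable_exp_neg_mul_sq (b := 1 / 2) (by norm_num)
    refine this.congr (Filter.Eventually.of_forall fun t => ?_)
    simp only
    congr 1
    ring
  exact setIntegral_mono_set hi.integrableOn
    (Filter.Eventually.of_forall fun t => (Real.exp_pos _).le)
    (Filter.Eventually.of_forall (Set.Ioi_subset_Ioi h))

lemma log_div_aux {a b : ℝ} (ha : 1 < a) (hab : a ≤ b) :
    Real.log a * (1 - (b ^ 2)⁻¹) ≤ Real.log b * (1 - (a ^ 2)⁻¹) := by
  have ha0 : 0 < a := by linarith
  have hb0 : 0 < b := by linarith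
  have hu : 0 < (a ^ 2)⁻¹ := by positivity
  have hu1 : (a ^ 2)⁻¹ ≤ 1 := inv_le_one_of_one_le₀ (by nlinarith)
  have hvu : (b ^ 2)⁻¹ ≤ (a ^ 2)⁻¹ := by gcongr
  have h1 : 2 * Real.log a ≤ a ^ 2 - 1 := by
    have := Real.log_le_sub_one_of_pos (x := a ^ 2) (by positivity)
    rwa [Real.log_pow] at this
  have h2 : 1 - a ^ 2 * (b ^ 2)⁻¹ ≤ 2 * (Real.log b - Real.log a) := by
    have := Real.log_le_sub_one_of_pos (x := a ^ 2 * (b ^ 2)⁻¹) (by positivity)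
    rw [Real.log_mul (by positivity) (by positivity), Real.log_inv, Real.log_pow,
      Real.log_pow] at this
    push_cast at this
    linarith
  have h3 := mul_le_mul_of_nonneg_right h1 (sub_nonneg.2 hvu)
  have h4 := mul_le_mul_of_nonneg_right h2 (sub_nonneg.2 hu1)
  have h5 : a ^ 2 * (a ^ 2)⁻¹ = 1 := mul_inv_cancel₀ (by positivity)
  have h6 : (a ^ 2 - 1) * ((a ^ 2)⁻¹ - (b ^ 2)⁻¹)
      = (1 - a ^ 2 * (b ^ 2)⁻¹) * (1 - (a ^ 2)⁻¹) := by
    linear_combination (1 - (b ^ 2)⁻¹) * h5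
  linarith

lemma arg_mono {a b R : ℝ} (hR : 0 ≤ R) (ha : 1 < a) (hab : a ≤ b) :
    (Real.log a - R) / Real.sqrt (1 - (a ^ 2)⁻¹)
      ≤ (Real.log b - R) / Real.sqrt (1 - (b ^ 2)⁻¹) := by
  have key := log_div_aux ha hab
  have ha0 : 0 < a := by linarith
  have hb0 : 0 < b := by linarith
  have hvu : (b ^ 2)⁻¹ ≤ (a ^ 2)⁻¹ := by gcongr
  have hu1 : (a ^ 2)⁻¹ < 1 := inv_lt_one_of_one_lt₀ (by nlinarith)
  have hV : 0 < 1 - (a ^ 2)⁻¹ := by linarith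
  have hW : 0 < 1 - (b ^ 2)⁻¹ := by linarith
  have hVW : 1 - (a ^ 2)⁻¹ ≤ 1 - (b ^ 2)⁻¹ := by linarith
  have hla : 0 ≤ Real.log b := Real.log_nonneg (by linarith)
  generalize 1 - (a ^ 2)⁻¹ = V at *
  generalize 1 - (b ^ 2)⁻¹ = W at *
  have hs := Real.sqrt_pos.2 hV
  have ht := Real.sqrt_pos.2 hW
  have hst := Real.sqrt_le_sqrt hVW
  rw [← Real.sq_sqrt hV.le, ← Real.sq_sqrt hW.le] at key
  generalize Real.sqrt V = s at *
  generalize Real.sqrt W = t at *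
  rw [div_le_div_iff₀ hs ht]
  have h1 : Real.log a * t ≤ Real.log b * s := by
    refine le_of_mul_le_mul_right ?_ ht
    have := mul_le_mul_of_nonneg_left hst (mul_nonneg hla hs.le)
    nlinarith
  nlinarith [mul_le_mul_of_nonneg_left hst hR]

/-- (Proposition 2, pointwise form) For `n > 0`, `R ≥ 0`, `γ₀ > 0`, the decoding error
probability `e(α) = f_Q(√n·(ln(1+α γ₀) − R)/√(1 − (1+α γ₀)^{−2}))` is non-increasing in
the large-scale channel gain `α`: if `0 < α' ≤ α*`, then `e(α*) ≤ e(α')`. -/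
theorem stmt9 (n R γ₀ : ℝ) (hn : 0 < n) (hR : 0 ≤ R) (hγ₀ : 0 < γ₀)
    (α' αstar : ℝ) (h' : 0 < α') (hle : α' ≤ αstar) :
    gaussianQ (Real.sqrt n * (Real.log (1 + αstar * γ₀) - R) /
        Real.sqrt (1 - ((1 + αstar * γ₀) ^ 2)⁻¹))
      ≤ gaussianQ (Real.sqrt n * (Real.log (1 + α' * γ₀) - R) /
        Real.sqrt (1 - ((1 + α' * γ₀) ^ 2)⁻¹)) := by
  apply gaussianQ_anti
  rw [mul_div_assoc, mul_div_assoc]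
  refine mul_le_mul_of_nonneg_left (arg_mono hR ?_ ?_) (Real.sqrt_nonneg n)
  · nlinarith [mul_pos h' hγ₀]
  · nlinarith [mul_le_mul_of_nonneg_right hle hγ₀.le]
end

section
/- Let T > 0, D > 0 and c > 0 be real constants. Then the function S ↦ (T/S)^{(S·D/c) − 1} is strictly decreasing on the set {S : S > T and S·D/c > 1}. -/
/-- For `T, D, c > 0`, the function `S ↦ (T/S)^{(S·D/c) − 1}` is strictly decreasing on
the set `{S : S > T and S·D/c > 1}`. -/
theorem stmt13 (T D c : ℝ) (hT : 0 < T) (hD : 0 < D) (hc : 0 < c) :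
    StrictAntiOn (fun S : ℝ => (T / S) ^ (S * D / c - 1))
      {S : ℝ | T < S ∧ 1 < S * D / c} := by
  rintro a ⟨ha, _⟩ b ⟨hb, hb1⟩ hab
  have ha0 : 0 < a := hT.trans ha
  have hb0 : 0 < b := hT.trans hb
  have h1 : T / b < T / a := div_lt_div_of_pos_left hT ha0 hab
  have h2 : a * D / c < b * D / c := by gcongr
  calc (T / b) ^ (b * D / c - 1) < (T / a) ^ (b * D / c - 1) :=
        Real.rpow_lt_rpow (by positivity) h1 (by linarith)
    _ < (T / a) ^ (a * D / c - 1) :=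
        Real.rpow_lt_rpow_of_exponent_gt (by positivity) ((div_lt_one ha0).2 ha) (by linarith)
end
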